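/- arXiv:1401.0903 — 2 statements merged into one kernel-verified Lean document; each statement's English description precedes it below -/
import Mathlib

section
/- Let Φ be a Hawkes kernel matrix satisfying hypothesis (H) and let Ψ = Σ_{k=1}^∞ Φ^{⋆k}. Then for every complex number z with Re(z) ≤ 0, the matrix I − Φ̂(z) is invertible and (I − Φ̂(z))^{−1} = I + Ψ̂(z), where I is the D×D identity matrix. -/
open MeasureTheory Matrix Filter Set

/-- Entrywise matrix convolution:
`(A ⋆ B)^{ij}(t) = ∑_{k} ∫ A^{ik}(s) B^{kj}(t - s) ds`. -/
noncomputable def mconv (D : ℕ) (A B : ℝ → Matrix (Fin D) (Fin D) ℝ) :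
    ℝ → Matrix (Fin D) (Fin D) ℝ :=
  fun t => Matrix.of fun i j => ∑ k : Fin D, ∫ s : ℝ, A s i k * B (t - s) k j

/-- `mconvIter D Φ k` is the `(k+1)`-fold matrix convolution `Φ^{⋆(k+1)}`. -/
noncomputable def mconvIter (D : ℕ) (Φ : ℝ → Matrix (Fin D) (Fin D) ℝ) :
    ℕ → ℝ → Matrix (Fin D) (Fin D) ℝ
  | 0 => Φ
  | (k + 1) => mconv D Φ (mconvIter D Φ k)

/-- `Ψ = ∑_{k=1}^∞ Φ^{⋆k}`, defined entrywise as a pointwise sum. -/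
noncomputable def hawkesPsi (D : ℕ) (Φ : ℝ → Matrix (Fin D) (Fin D) ℝ) :
    ℝ → Matrix (Fin D) (Fin D) ℝ :=
  fun t => Matrix.of fun i j => ∑' k : ℕ, mconvIter D Φ k t i j

/-- The matrix `‖Φ‖` of `L¹` norms: `‖Φ‖^{ij} = ∫ φ^{ij}(t) dt` (entries nonnegative). -/
noncomputable def kernelNorm (D : ℕ) (Φ : ℝ → Matrix (Fin D) (Fin D) ℝ) :
    Matrix (Fin D) (Fin D) ℝ :=
  Matrix.of fun i j => ∫ t : ℝ, Φ t i j

/-- A Hawkes kernel matrix: measurable, nonnegative, integrable and causal entries. -/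
def IsHawkesKernel (D : ℕ) (Φ : ℝ → Matrix (Fin D) (Fin D) ℝ) : Prop :=
  (∀ i j, Measurable fun t => Φ t i j) ∧
  (∀ t, ∀ i j, 0 ≤ Φ t i j) ∧
  (∀ i j, Integrable fun t => Φ t i j) ∧
  (∀ t < (0 : ℝ), Φ t = 0)

/-- Hypothesis (H): the spectral radius of `‖Φ‖` is strictly smaller than 1. -/
def HypothesisH (D : ℕ) (Φ : ℝ → Matrix (Fin D) (Fin D) ℝ) : Prop :=
  spectralRadius ℂ ((kernelNorm D Φ).map Complex.ofReal) < 1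

/-- `q(t) = Σ Ψ(-t)ᵀ Σ⁻¹`. -/
noncomputable def hawkesQ (D : ℕ) (Φ : ℝ → Matrix (Fin D) (Fin D) ℝ)
    (S : Matrix (Fin D) (Fin D) ℝ) : ℝ → Matrix (Fin D) (Fin D) ℝ :=
  fun t => S * (hawkesPsi D Φ (-t))ᵀ * S⁻¹

/-- The conditional-expectation matrix
`g(t) = Ψ(t) + Σ Ψ(-t)ᵀ Σ⁻¹ + (Ψ ⋆ q)(t)`. -/
noncomputable def hawkesG (D : ℕ) (Φ : ℝ → Matrix (Fin D) (Fin D) ℝ)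
    (S : Matrix (Fin D) (Fin D) ℝ) : ℝ → Matrix (Fin D) (Fin D) ℝ :=
  fun t => hawkesPsi D Φ t + hawkesQ D Φ S t +
    mconv D (hawkesPsi D Φ) (hawkesQ D Φ S) t

/-- Entrywise Laplace transform `F̂(z) = ∫ F(t) e^{zt} dt`. -/
noncomputable def mlaplace (D : ℕ) (F : ℝ → Matrix (Fin D) (Fin D) ℝ) (z : ℂ) :
    Matrix (Fin D) (Fin D) ℂ :=
  Matrix.of fun i j => ∫ t : ℝ, (F t i j : ℂ) * Complex.exp (z * t)


open scoped ENNReal Topology Convolution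

/-- In a complex Banach algebra, powers are absolutely summable if the spectral radius is `< 1`. -/
theorem summable_norm_pow_of_sr {A : Type*} [NormedRing A] [NormedAlgebra ℂ A] [CompleteSpace A]
    (a : A) (h : spectralRadius ℂ a < 1) : Summable fun n : ℕ => ‖a ^ n‖ := by
  obtain ⟨r, hr1, hr2⟩ := ENNReal.lt_iff_exists_nnreal_btwn.1 h
  have hr : (r : ℝ) < 1 := by exact_mod_cast hr2
  have ht := spectrum.pow_nnnorm_pow_one_div_tendsto_nhds_spectralRadius a
  have hev := ht.eventually_lt_const hr1
  refine Summable.of_norm_bounded_eventually_nat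
    (summable_geometric_of_lt_one r.coe_nonneg hr) ?_
  filter_upwards [hev, eventually_gt_atTop 0] with n hn hn0
  have hn0' : (n : ℝ) ≠ 0 := by exact_mod_cast hn0.ne'
  have h1 : ((‖a ^ n‖₊ : ℝ≥0∞) ^ (1 / n : ℝ)) ^ (n : ℝ) ≤ (r : ℝ≥0∞) ^ (n : ℝ) :=
    ENNReal.rpow_le_rpow hn.le (by positivity)
  rw [← ENNReal.rpow_mul, one_div, inv_mul_cancel₀ hn0', ENNReal.rpow_one,
    ENNReal.rpow_natCast] at h1
  have h2 : ‖a ^ n‖₊ ≤ r ^ n := by exact_mod_cast h1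
  rw [norm_norm]
  exact_mod_cast h2

section
attribute [local instance] Matrix.linftyOpNormedRing Matrix.linftyOpNormedAlgebra

/-- Entrywise summability of powers of a matrix of spectral radius `< 1`. -/
theorem summable_entry_pow (D : ℕ) (M : Matrix (Fin D) (Fin D) ℂ)
    (h : spectralRadius ℂ M < 1) (i j : Fin D) : Summable fun n : ℕ => ‖(M ^ n) i j‖ := by
  have : CompleteSpace (Matrix (Fin D) (Fin D) ℂ) := FiniteDimensional.complete ℂ _
  refine (summable_norm_pow_of_sr M h).of_nonneg_of_le (fun _ => norm_nonneg _) fun n => ?_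
  generalize M ^ n = B
  rw [Matrix.linfty_opNorm_def, ← coe_nnnorm, NNReal.coe_le_coe]
  exact (Finset.single_le_sum (f := fun j => ‖B i j‖₊) (fun _ _ => zero_le) (Finset.mem_univ j)).trans
    (Finset.le_sup (f := fun i => ∑ j, ‖B i j‖₊) (Finset.mem_univ i))

end

theorem integrable_mul_exp {f : ℝ → ℝ} (hf : Integrable f) (hc : ∀ t < (0 : ℝ), f t = 0)
    {z : ℂ} (hz : z.re ≤ 0) :
    Integrable fun t : ℝ => (f t : ℂ) * Complex.exp (z * t) := by
  refine hf.mono (hf.ofReal.1.mul (by fun_prop)) (Eventually.of_forall fun t => ?_)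
  rw [norm_mul, Complex.norm_real, Complex.norm_exp]
  rcases lt_or_ge t 0 with ht | ht
  · simp [hc t ht]
  · refine mul_le_of_le_one_right (norm_nonneg _) (Real.exp_le_one_iff.2 ?_)
    simpa using mul_nonpos_of_nonpos_of_nonneg hz ht

theorem conv_mul_exp (f g : ℝ → ℝ) (z : ℂ) (t : ℝ) :
    ((∫ s : ℝ, f s * g (t - s) : ℝ) : ℂ) * Complex.exp (z * t) =
      ((fun t : ℝ => (f t : ℂ) * Complex.exp (z * t)) ⋆[ContinuousLinearMap.mul ℝ ℂ, volume]
        (fun t : ℝ => (g t : ℂ) * Complex.exp (z * t))) t := by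
  rw [convolution_def, ← integral_complex_ofReal, ← integral_mul_const]
  congr 1
  ext s
  have : Complex.exp (z * t) = Complex.exp (z * s) * Complex.exp (z * ((t - s : ℝ) : ℂ)) := by
    rw [← Complex.exp_add]; congr 1; push_cast; ring
  simp only [ContinuousLinearMap.mul_apply']
  rw [this]; push_cast; ring

theorem mconvIter_props (D : ℕ) (Φ : ℝ → Matrix (Fin D) (Fin D) ℝ) (hΦ : IsHawkesKernel D Φ)
    (k : ℕ) :
    (∀ t, ∀ i j, 0 ≤ mconvIter D Φ k t i j) ∧
    (∀ i j, Integrable fun t => mconvIter D Φ k t i j) ∧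
    (∀ t < (0 : ℝ), ∀ i j, mconvIter D Φ k t i j = 0) ∧
    (∀ z : ℂ, z.re ≤ 0 → mlaplace D (mconvIter D Φ k) z = mlaplace D Φ z ^ (k + 1)) := by
  obtain ⟨-, h0, hi, hc⟩ := hΦ
  have hc' : ∀ t < (0 : ℝ), ∀ i j, Φ t i j = 0 := fun t ht i j => by rw [hc t ht]; rfl
  induction k with
  | zero => exact ⟨h0, hi, hc', fun z _ => by simp [mconvIter]⟩
  | succ k ih =>
    obtain ⟨p0, pi, pc, pl⟩ := ih
    have es : ∀ t i j, mconvIter D Φ (k + 1) t i j =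
        ∑ l, ∫ s : ℝ, Φ s i l * mconvIter D Φ k (t - s) l j := fun t i j => rfl
    refine ⟨fun t i j => ?_, fun i j => ?_, fun t ht i j => ?_, fun z hz => ?_⟩
    · rw [es]
      exact Finset.sum_nonneg fun l _ => integral_nonneg fun s => mul_nonneg (h0 _ _ _) (p0 _ _ _)
    · simp only [es]
      exact integrable_finsetSum _ fun l _ =>
        (hi i l).integrable_convolution (ContinuousLinearMap.mul ℝ ℝ) (pi l j)
    · rw [es]
      refine Finset.sum_eq_zero fun l _ => ?_
      refine integral_eq_zero_of_ae (Eventually.of_forall fun s => ?_)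
      rcases lt_or_ge s 0 with hs | hs
      · simp [hc' s hs]
      · simp [pc (t - s) (by linarith)]
    · rw [pow_succ', ← pl z hz]
      ext i j
      have e : ∀ t : ℝ, (mconvIter D Φ (k + 1) t i j : ℂ) * Complex.exp (z * t) =
          ∑ l, ((fun t : ℝ => (Φ t i l : ℂ) * Complex.exp (z * t))
            ⋆[ContinuousLinearMap.mul ℝ ℂ, volume]
            (fun t : ℝ => (mconvIter D Φ k t l j : ℂ) * Complex.exp (z * t))) t := by
        intro t
        simp only [← conv_mul_exp]
        rw [← Finset.sum_mul]
        simp [mconvIter, mconv]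
      have i1 := fun l => integrable_mul_exp (hi i l) (fun t ht => hc' t ht i l) hz
      have i2 := fun l => integrable_mul_exp (pi l j) (fun t ht => pc t ht l j) hz
      rw [Matrix.mul_apply]
      simp only [mlaplace, Matrix.of_apply, e]
      rw [integral_finsetSum _ fun l _ =>
        (i1 l).integrable_convolution (ContinuousLinearMap.mul ℝ ℂ) (i2 l)]
      exact Finset.sum_congr rfl fun l _ => integral_convolution _ (i1 l) (i2 l)

theorem hasSum_laplace (D : ℕ) (Φ : ℝ → Matrix (Fin D) (Fin D) ℝ)
    (hΦ : IsHawkesKernel D Φ) (hH : HypothesisH D Φ) (z : ℂ) (hz : z.re ≤ 0) :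
    HasSum (fun k : ℕ => mlaplace D Φ z ^ (k + 1)) (mlaplace D (hawkesPsi D Φ) z) := by
  refine Pi.hasSum.2 fun i => Pi.hasSum.2 fun j => ?_
  have hN : mlaplace D Φ 0 = (kernelNorm D Φ).map Complex.ofReal := by
    ext i j
    simp only [mlaplace, kernelNorm, Matrix.of_apply, Matrix.map_apply, zero_mul, Complex.exp_zero,
      mul_one]
    exact integral_complex_ofReal
  have hS := (summable_nat_add_iff 1).2 (summable_entry_pow D _ hH i j)
  have hI : ∀ k, Integrable fun t : ℝ => (mconvIter D Φ k t i j : ℂ) * Complex.exp (z * t) :=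
    fun k => integrable_mul_exp ((mconvIter_props D Φ hΦ k).2.1 i j)
      (fun t ht => (mconvIter_props D Φ hΦ k).2.2.1 t ht i j) hz
  have key := hasSum_integral_of_summable_integral_norm hI ?_
  · have e1 : (fun k : ℕ => (mlaplace D Φ z ^ (k + 1)) i j) =
        fun k => ∫ t : ℝ, (mconvIter D Φ k t i j : ℂ) * Complex.exp (z * t) := by
      funext k
      rw [← (mconvIter_props D Φ hΦ k).2.2.2 z hz]; rfl
    have e2 : mlaplace D (hawkesPsi D Φ) z i j =
        ∫ t : ℝ, ∑' k : ℕ, (mconvIter D Φ k t i j : ℂ) * Complex.exp (z * t) := by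
      simp only [mlaplace, hawkesPsi, Matrix.of_apply, Complex.ofReal_tsum, tsum_mul_right]
    rw [e1, e2]
    exact key
  · refine hS.of_nonneg_of_le (fun k => integral_nonneg fun _ => norm_nonneg _) fun k => ?_
    obtain ⟨p0, pi, pc, pl⟩ := mconvIter_props D Φ hΦ k
    have e : (((kernelNorm D Φ).map Complex.ofReal) ^ (k + 1)) i j
        = ((∫ t, mconvIter D Φ k t i j : ℝ) : ℂ) := by
      rw [← hN, ← pl 0 (by simp)]
      simp only [mlaplace, Matrix.of_apply, zero_mul, Complex.exp_zero, mul_one]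
      exact integral_complex_ofReal
    rw [e, Complex.norm_real, Real.norm_of_nonneg (integral_nonneg fun t => p0 t i j)]
    refine integral_mono (hI k).norm (pi i j) fun t => ?_
    dsimp only
    rw [norm_mul, Complex.norm_real, Complex.norm_exp, Real.norm_of_nonneg (p0 t i j)]
    rcases lt_or_ge t 0 with ht | ht
    · simp [pc t ht]
    · refine mul_le_of_le_one_right (p0 t i j) (Real.exp_le_one_iff.2 ?_)
      simpa using mul_nonpos_of_nonpos_of_nonneg hz ht

/-- Under hypothesis (H), for every `z` with `Re z ≤ 0` the matrix
`I - Φ̂(z)` is invertible with inverse `I + Ψ̂(z)`. -/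
theorem laplace_resolvent_inverse (D : ℕ) (hD : 0 < D)
    (Φ : ℝ → Matrix (Fin D) (Fin D) ℝ)
    (hΦ : IsHawkesKernel D Φ) (hH : HypothesisH D Φ) :
    ∀ z : ℂ, z.re ≤ 0 →
      IsUnit (1 - mlaplace D Φ z) ∧
      (1 - mlaplace D Φ z)⁻¹ = 1 + mlaplace D (hawkesPsi D Φ) z := by
  intro z hz
  have h := hasSum_laplace D Φ hΦ hH z hz
  have hs : Summable (fun k : ℕ => mlaplace D Φ z ^ k) := (summable_nat_add_iff 1).1 h.summable
  have ht : ∑' k : ℕ, mlaplace D Φ z ^ k = 1 + mlaplace D (hawkesPsi D Φ) z := by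
    rw [hs.tsum_eq_zero_add, h.tsum_eq, pow_zero]
  have h1 := hs.one_sub_mul_tsum_pow
  rw [ht] at h1
  exact ⟨IsUnit.of_mul_eq_one _ h1, Matrix.inv_eq_right_inv h1⟩
end

section
/- Let Φ be a Hawkes kernel matrix satisfying hypothesis (H), Ψ = Σ_{k=1}^∞ Φ^{⋆k}, Σ a diagonal D×D matrix with strictly positive diagonal entries, and let g be the associated conditional-expectation matrix. If χ : ℝ → Matrix (Fin D) (Fin D) ℝ is any matrix-valued function whose entries are causal and integrable (not assumed nonnegative) such that g(t) = χ(t) + (χ ⋆ g)(t) for almost every t > 0, then χ(t) = Φ(t) for almost every t ∈ ℝ. In other words, Φ is the unique causal L¹ solution of the Wiener–Hopf system associated with g. -/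
open MeasureTheory Matrix Filter Set

/-- all entries integrable -/
def IntM (D : ℕ) (F : ℝ → Matrix (Fin D) (Fin D) ℝ) : Prop :=
  ∀ i j, Integrable fun t => F t i j

lemma sconv_integrable {f g : ℝ → ℝ} (hf : Integrable f) (hg : Integrable g) :
    Integrable (fun t => ∫ s, f s * g (t - s)) :=
  hf.integrable_convolution (ContinuousLinearMap.mul ℝ ℝ) hg

lemma integrable_exp {f : ℝ → ℝ} (hf : Integrable f) (w : ℝ) :
    Integrable (fun t : ℝ => (f t : ℂ) * Complex.exp ((w * Complex.I) * t)) := by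
  refine (hf.ofReal (𝕜 := ℂ)).mul_bdd (c := 1) ?_ ?_
  · exact Continuous.aestronglyMeasurable (by fun_prop)
  · refine Eventually.of_forall fun t => ?_
    rw [Complex.norm_exp]; simp

lemma sconv_laplace {f g : ℝ → ℝ} (hf : Integrable f) (hg : Integrable g) (w : ℝ) :
    ∫ t : ℝ, ((∫ s, f s * g (t - s) : ℝ) : ℂ) * Complex.exp ((w * Complex.I) * t)
      = (∫ t : ℝ, (f t : ℂ) * Complex.exp ((w * Complex.I) * t)) *
        (∫ t : ℝ, (g t : ℂ) * Complex.exp ((w * Complex.I) * t)) := by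
  have := integral_convolution (ContinuousLinearMap.mul ℝ ℂ) (integrable_exp hf w)
    (integrable_exp hg w)
  simp only [convolution, ContinuousLinearMap.mul_apply'] at this
  rw [← this]
  refine integral_congr_ae (Eventually.of_forall fun t => ?_)
  simp only
  rw [← integral_complex_ofReal, ← integral_mul_const]
  refine integral_congr_ae (Eventually.of_forall fun s => ?_)
  simp only
  have : Complex.exp ((w * Complex.I) * t) =
    Complex.exp ((w * Complex.I) * s) * Complex.exp ((w * Complex.I) * (t - s : ℝ)) := by
    rw [← Complex.exp_add]; congr 1; push_cast; ring
  rw [this]; push_cast; ring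

lemma laplace_inj {f : ℝ → ℝ} (hf : Integrable f)
    (h : ∀ w : ℝ, ∫ t : ℝ, (f t : ℂ) * Complex.exp ((w * Complex.I) * t) = 0) :
    ∀ᵐ t : ℝ, f t = 0 := by
  have hp : ∀ u : ℝ → ℝ, Integrable u → IsFiniteMeasure
      (volume.withDensity fun t => ENNReal.ofReal (u t)) := fun u hu =>
    isFiniteMeasure_withDensity_ofReal hu.2
  have key : ∀ u : ℝ → ℝ, Integrable u → ∀ w : ℝ,
      charFun (volume.withDensity fun t => ENNReal.ofReal (u t)) w
        = ∫ t : ℝ, ((max (u t) 0 : ℝ) : ℂ) * Complex.exp ((w * Complex.I) * t) := by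
    intro u hu w
    rw [charFun_apply_real, integral_withDensity_eq_integral_toReal_smul₀ hu.1.aemeasurable.ennreal_ofReal
      (by simp)]
    refine integral_congr_ae (Eventually.of_forall fun t => ?_)
    simp only [ENNReal.toReal_ofReal', Complex.real_smul]
    congr 2; ring
  have h1 := hp f hf
  have h2 := hp (-f) hf.neg
  have heq : (volume.withDensity fun t => ENNReal.ofReal (f t)) =
      (volume.withDensity fun t => ENNReal.ofReal ((-f) t)) := by
    refine Measure.ext_of_charFun (funext fun w => ?_)
    rw [key f hf, key (-f) hf.neg, ← sub_eq_zero,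
      ← integral_sub (integrable_exp hf.pos_part w) (integrable_exp hf.neg.pos_part w), ← h w]
    refine integral_congr_ae (Eventually.of_forall fun t => ?_)
    simp only
    rw [← sub_mul, ← Complex.ofReal_sub]
    congr 2
    simp only [Pi.neg_apply]
    rcases le_total 0 (f t) with h | h
    · rw [max_eq_left h, max_eq_right (by linarith)]; ring
    · rw [max_eq_right h, max_eq_left (by linarith)]; ring
  rw [withDensity_eq_iff_of_sigmaFinite hf.1.aemeasurable.ennreal_ofReal
    hf.neg.1.aemeasurable.ennreal_ofReal] at heq
  filter_upwards [heq] with t ht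
  simp only [Pi.neg_apply] at ht
  rcases lt_trichotomy (f t) 0 with h | h | h
  · rw [ENNReal.ofReal_of_nonpos h.le] at ht
    have := (ENNReal.ofReal_eq_zero.1 ht.symm); linarith
  · exact h
  · rw [ENNReal.ofReal_of_nonpos (p := - f t) (by linarith)] at ht
    have := (ENNReal.ofReal_eq_zero.1 ht); linarith

section mat
variable {D : ℕ} {A B : ℝ → Matrix (Fin D) (Fin D) ℝ}

lemma IntM.mconv (hA : IntM D A) (hB : IntM D B) : IntM D (mconv D A B) := by
  intro i j
  simp only [_root_.mconv, Matrix.of_apply]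
  exact integrable_finsetSum _ fun k _ => sconv_integrable (hA i k) (hB k j)

lemma IntM.add (hA : IntM D A) (hB : IntM D B) : IntM D (fun t => A t + B t) :=
  fun i j => (hA i j).add (hB i j)

lemma IntM.sub (hA : IntM D A) (hB : IntM D B) : IntM D (fun t => A t - B t) :=
  fun i j => (hA i j).sub (hB i j)

lemma mlaplace_add (hA : IntM D A) (hB : IntM D B) (w : ℝ) :
    mlaplace D (fun t => A t + B t) (w * Complex.I) =
      mlaplace D A (w * Complex.I) + mlaplace D B (w * Complex.I) := by
  ext i j
  simp only [mlaplace, Matrix.of_apply, Matrix.add_apply, Complex.ofReal_add, add_mul]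
  exact integral_add (integrable_exp (hA i j) w) (integrable_exp (hB i j) w)

lemma mlaplace_sub (hA : IntM D A) (hB : IntM D B) (w : ℝ) :
    mlaplace D (fun t => A t - B t) (w * Complex.I) =
      mlaplace D A (w * Complex.I) - mlaplace D B (w * Complex.I) := by
  ext i j
  simp only [mlaplace, Matrix.of_apply, Matrix.sub_apply, Complex.ofReal_sub, sub_mul]
  exact integral_sub (integrable_exp (hA i j) w) (integrable_exp (hB i j) w)

lemma mlaplace_mconv (hA : IntM D A) (hB : IntM D B) (w : ℝ) :
    mlaplace D (mconv D A B) (w * Complex.I) =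
      mlaplace D A (w * Complex.I) * mlaplace D B (w * Complex.I) := by
  ext i j
  simp only [mlaplace, Matrix.of_apply, Matrix.mul_apply, mconv]
  rw [← Finset.sum_congr rfl fun k _ => sconv_laplace (hA i k) (hB k j) w]
  simp only [Complex.ofReal_sum, Finset.sum_mul]
  exact integral_finsetSum _ fun k _ =>
    integrable_exp (sconv_integrable (hA i k) (hB k j)) w

lemma mlaplace_inj (hA : IntM D A) (hB : IntM D B)
    (h : ∀ w : ℝ, mlaplace D A (w * Complex.I) = mlaplace D B (w * Complex.I)) :
    ∀ᵐ t : ℝ, A t = B t := by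
  have h1 : ∀ i j, ∀ᵐ t : ℝ, (A t - B t) i j = 0 := by
    intro i j
    refine laplace_inj ((hA.sub hB) i j) fun w => ?_
    have := congrFun (congrFun (mlaplace_sub hA hB w) i) j
    rw [h w, sub_self] at this
    exact this
  have h2 : ∀ᵐ t : ℝ, ∀ i j, (A t - B t) i j = 0 := by
    simp only [ae_all_iff]; exact h1
  filter_upwards [h2] with t ht
  rw [← sub_eq_zero]; ext i j; exact ht i j

lemma mlaplace_congr_zero (h : ∀ᵐ t : ℝ, A t = 0) (z : ℂ) : mlaplace D A z = 0 := by
  ext i j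
  simp only [mlaplace, Matrix.of_apply, Matrix.zero_apply]
  refine integral_eq_zero_of_ae ?_
  filter_upwards [h] with t ht
  simp [ht]

/-- causal convolution, negative times -/
lemma mconv_causal (hA : ∀ᵐ s : ℝ, s < 0 → A s = 0) (hB : ∀ s < (0 : ℝ), B s = 0) :
    ∀ t < (0 : ℝ), mconv D A B t = 0 := by
  intro t ht
  ext i j
  simp only [mconv, Matrix.of_apply, Matrix.zero_apply]
  refine Finset.sum_eq_zero fun k _ => integral_eq_zero_of_ae ?_
  filter_upwards [hA] with s hs
  rcases lt_or_ge s 0 with h | h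
  · simp [hs h]
  · simp [hB (t - s) (by linarith)]

lemma mconv_anticausal (hA : ∀ᵐ s : ℝ, 0 < s → A s = 0) (hB : ∀ s > (0 : ℝ), B s = 0) :
    ∀ t > (0 : ℝ), mconv D A B t = 0 := by
  intro t ht
  ext i j
  simp only [mconv, Matrix.of_apply, Matrix.zero_apply]
  refine Finset.sum_eq_zero fun k _ => integral_eq_zero_of_ae ?_
  filter_upwards [hA] with s hs
  rcases lt_or_ge 0 s with h | h
  · simp [hs h]
  · simp [hB (t - s) (by linarith)]

variable {S : Matrix (Fin D) (Fin D) ℝ}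

/-- the conjugated time reversal -/
noncomputable def conjRev (D : ℕ) (S : Matrix (Fin D) (Fin D) ℝ)
    (A : ℝ → Matrix (Fin D) (Fin D) ℝ) : ℝ → Matrix (Fin D) (Fin D) ℝ :=
  fun t => S * (A (-t))ᵀ * S⁻¹

lemma conjRev_int (hA : IntM D A) : IntM D (conjRev D S A) := by
  intro i j
  simp only [conjRev, Matrix.mul_apply, Matrix.transpose_apply, Finset.sum_mul]
  refine integrable_finsetSum _ fun k _ => integrable_finsetSum _ fun l _ => ?_
  exact (((hA k l).comp_neg).const_mul _).mul_const _

lemma conjRev_laplace (hA : IntM D A) (w : ℝ) :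
    mlaplace D (conjRev D S A) (w * Complex.I) =
      S.map Complex.ofReal * (mlaplace D A ((-w : ℝ) * Complex.I))ᵀ *
        (S⁻¹).map Complex.ofReal := by
  ext i j
  simp only [conjRev, mlaplace, Matrix.mul_apply, Matrix.transpose_apply, Finset.sum_mul,
    Matrix.of_apply, Matrix.map_apply, Complex.ofReal_sum]
  rw [integral_finsetSum]
  · refine Finset.sum_congr rfl fun k _ => ?_
    rw [integral_finsetSum]
    · refine Finset.sum_congr rfl fun l _ => ?_
      rw [← integral_const_mul, ← integral_mul_const, ← integral_neg_eq_self]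
      refine integral_congr_ae (Eventually.of_forall fun t => ?_)
      simp only [neg_neg]
      push_cast
      rw [show (w : ℂ) * Complex.I * -t = -w * Complex.I * t by ring]
      ring
    · intro l _
      exact integrable_exp ((((hA k l).comp_neg).const_mul _).mul_const _) w
  · intro k _
    refine integrable_finsetSum _ fun l _ => ?_
    exact integrable_exp ((((hA k l).comp_neg).const_mul _).mul_const _) w

end mat

section specrad
attribute [local instance] Matrix.linftyOpNormedRing Matrix.linftyOpNormedAlgebra

lemma summable_pow_entry {D : ℕ} (N : Matrix (Fin D) (Fin D) ℂ)
    (h : spectralRadius ℂ N < 1) (i j : Fin D) :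
    Summable fun k : ℕ => ‖(N ^ (k + 1)) i j‖ := by
  obtain ⟨r, hr1, hr2⟩ := ENNReal.lt_iff_exists_nnreal_btwn.1 h
  have hr : r < 1 := by exact_mod_cast hr2
  have ht := spectrum.pow_nnnorm_pow_one_div_tendsto_nhds_spectralRadius N
  have hev := (ht.eventually (gt_mem_nhds hr1)).and (eventually_gt_atTop 0)
  have hle : ∀ᶠ n : ℕ in atTop, ‖N ^ n‖ ≤ (r : ℝ) ^ n := by
    filter_upwards [hev] with n hn
    obtain ⟨h1, h2⟩ := hn
    have h3 := ENNReal.rpow_le_rpow h1.le (Nat.cast_nonneg n : (0 : ℝ) ≤ n)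
    have hn0 : (n : ℝ) ≠ 0 := by exact_mod_cast h2.ne'
    rw [← ENNReal.rpow_mul, one_div, inv_mul_cancel₀ hn0, ENNReal.rpow_one,
      ENNReal.rpow_natCast] at h3
    have h4 : ‖N ^ n‖₊ ≤ r ^ n := by exact_mod_cast h3
    exact_mod_cast h4
  have hs : Summable fun n : ℕ => ‖N ^ n‖ := by
    refine Summable.of_norm_bounded_eventually_nat
      (summable_geometric_of_lt_one r.2 (by exact_mod_cast hr)) ?_
    filter_upwards [hle] with n hn
    rwa [norm_norm]
  have hs' := (summable_nat_add_iff 1).2 hs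
  refine Summable.of_nonneg_of_le (fun _ => norm_nonneg _) (fun k => ?_) hs'
  have : ‖(N ^ (k + 1)) i j‖₊ ≤ ‖N ^ (k + 1)‖₊ := by
    rw [Matrix.linfty_opNNNorm_def]
    exact (Finset.single_le_sum (f := fun j => ‖(N ^ (k + 1)) i j‖₊)
      (fun _ _ => zero_le) (Finset.mem_univ j)).trans
      (Finset.le_sup (f := fun i => ∑ j, ‖(N ^ (k + 1)) i j‖₊) (Finset.mem_univ i))
  exact_mod_cast this

end specrad

section psi
variable {D : ℕ} {Φ : ℝ → Matrix (Fin D) (Fin D) ℝ}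

lemma iter_int (hΦ : IsHawkesKernel D Φ) (k : ℕ) : IntM D (mconvIter D Φ k) := by
  induction k with
  | zero => exact hΦ.2.2.1
  | succ k ih => exact IntM.mconv (A := Φ) hΦ.2.2.1 ih

lemma iter_nonneg (hΦ : IsHawkesKernel D Φ) (k : ℕ) : ∀ t i j, 0 ≤ mconvIter D Φ k t i j := by
  induction k with
  | zero => exact hΦ.2.1
  | succ k ih =>
    intro t i j
    simp only [mconvIter, mconv, Matrix.of_apply]
    exact Finset.sum_nonneg fun l _ => integral_nonneg fun s => mul_nonneg (hΦ.2.1 _ _ _) (ih _ _ _)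

lemma iter_causal (hΦ : IsHawkesKernel D Φ) (k : ℕ) : ∀ t < (0 : ℝ), mconvIter D Φ k t = 0 := by
  induction k with
  | zero => exact hΦ.2.2.2
  | succ k ih => exact mconv_causal (Eventually.of_forall hΦ.2.2.2) ih

lemma iter_laplace (hΦ : IsHawkesKernel D Φ) (k : ℕ) (w : ℝ) :
    mlaplace D (mconvIter D Φ k) (w * Complex.I) = mlaplace D Φ (w * Complex.I) ^ (k + 1) := by
  induction k with
  | zero => simp [mconvIter]
  | succ k ih =>
    rw [mconvIter, mlaplace_mconv hΦ.2.2.1 (iter_int hΦ k), ih, ← pow_succ']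

lemma iter_summable (hΦ : IsHawkesKernel D Φ) (hH : HypothesisH D Φ) (i j : Fin D) :
    Summable fun k : ℕ => ∫ t, mconvIter D Φ k t i j := by
  have hN : (kernelNorm D Φ).map Complex.ofReal = mlaplace D Φ ((0 : ℝ) * Complex.I) := by
    ext i j
    simp [kernelNorm, mlaplace, integral_complex_ofReal]
  unfold HypothesisH at hH
  rw [hN] at hH
  refine (summable_pow_entry _ hH i j).congr fun k => ?_
  rw [← iter_laplace hΦ]
  simp only [mlaplace, Matrix.of_apply, Complex.ofReal_zero, zero_mul, Complex.exp_zero, mul_one,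
    integral_complex_ofReal, Complex.norm_real]
  exact Real.norm_of_nonneg (integral_nonneg fun t => iter_nonneg hΦ k t i j)

lemma psi_int (hΦ : IsHawkesKernel D Φ) (hH : HypothesisH D Φ) : IntM D (hawkesPsi D Φ) := by
  intro i j
  have hs := iter_summable hΦ hH i j
  have hm : ∀ k, AEMeasurable fun t => ENNReal.ofReal (mconvIter D Φ k t i j) := fun k =>
    (iter_int hΦ k i j).1.aemeasurable.ennreal_ofReal
  have hfin : ∫⁻ t, ∑' k, ENNReal.ofReal (mconvIter D Φ k t i j) ≠ ⊤ := by
    rw [lintegral_tsum hm]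
    have : ∀ k, ∫⁻ t, ENNReal.ofReal (mconvIter D Φ k t i j) =
        ENNReal.ofReal (∫ t, mconvIter D Φ k t i j) := fun k =>
      (ofReal_integral_eq_lintegral_ofReal (iter_int hΦ k i j)
        (Eventually.of_forall fun t => iter_nonneg hΦ k t i j)).symm
    simp only [this]
    exact hs.tsum_ofReal_ne_top
  have := integrable_toReal_of_lintegral_ne_top (AEMeasurable.tsum hm) hfin
  refine this.congr ?_
  refine Eventually.of_forall fun t => ?_
  simp only [hawkesPsi, Matrix.of_apply]
  rw [ENNReal.tsum_toReal_eq (fun k => ENNReal.ofReal_ne_top)]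
  exact tsum_congr fun k => ENNReal.toReal_ofReal (iter_nonneg hΦ k t i j)

lemma psi_causal (hΦ : IsHawkesKernel D Φ) : ∀ t < (0 : ℝ), hawkesPsi D Φ t = 0 := by
  intro t ht
  ext i j
  simp [hawkesPsi, iter_causal hΦ _ t ht]

lemma psi_laplace_hasSum (hΦ : IsHawkesKernel D Φ) (hH : HypothesisH D Φ) (w : ℝ) :
    HasSum (fun k : ℕ => mlaplace D Φ (w * Complex.I) ^ (k + 1))
      (mlaplace D (hawkesPsi D Φ) (w * Complex.I)) := by
  refine Pi.hasSum.2 fun i => Pi.hasSum.2 fun j => ?_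
  have := hasSum_integral_of_summable_integral_norm
    (F := fun k (t : ℝ) => (mconvIter D Φ k t i j : ℂ) * Complex.exp ((w * Complex.I) * t))
    (fun k => integrable_exp (iter_int hΦ k i j) w) ?_
  · have e : (fun k : ℕ => (mlaplace D Φ (w * Complex.I) ^ (k + 1)) i j) = fun k : ℕ =>
        mlaplace D (mconvIter D Φ k) (w * Complex.I) i j :=
      funext fun k => by rw [iter_laplace hΦ]
    have e2 : mlaplace D (hawkesPsi D Φ) (w * Complex.I) i j = ∫ t : ℝ, ∑' k : ℕ,
        (mconvIter D Φ k t i j : ℂ) * Complex.exp ((w * Complex.I) * t) := by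
      simp only [mlaplace, hawkesPsi, Matrix.of_apply, Complex.ofReal_tsum, tsum_mul_right]
    rw [e, e2]
    exact this
  · refine (iter_summable hΦ hH i j).congr fun k => ?_
    refine integral_congr_ae (Eventually.of_forall fun t => ?_)
    simp only [norm_mul, Complex.norm_real, Complex.norm_exp]
    rw [Real.norm_of_nonneg (iter_nonneg hΦ k t i j)]
    simp

lemma psi_inv (hΦ : IsHawkesKernel D Φ) (hH : HypothesisH D Φ) (w : ℝ) :
    (1 - mlaplace D Φ (w * Complex.I)) * (1 + mlaplace D (hawkesPsi D Φ) (w * Complex.I)) = 1 := by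
  have h := psi_laplace_hasSum hΦ hH w
  set P := mlaplace D Φ (w * Complex.I)
  set Q := mlaplace D (hawkesPsi D Φ) (w * Complex.I)
  have h1 : HasSum (fun k : ℕ => P ^ (k + 2)) (P * Q) := by
    simpa [← pow_succ'] using HasSum.mul_left P h
  have h2 : HasSum (fun k : ℕ => P ^ (k + 1)) (P * Q + P) := by
    rw [← hasSum_nat_add_iff' 1] at h ⊢
    simpa using h1
  have : Q = P * Q + P := h.unique h2
  calc (1 - P) * (1 + Q) = 1 + Q - (P * Q + P) := by noncomm_ring
    _ = 1 := by rw [← this]; abel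

end psi
/-- `Φ` is the unique causal `L¹` solution of the Wiener-Hopf system
`g(t) = χ(t) + (χ ⋆ g)(t)` (`t > 0`) associated with its conditional-expectation matrix `g`. -/
theorem hawkes_wienerHopf_unique (D : ℕ) (hD : 0 < D)
    (Φ : ℝ → Matrix (Fin D) (Fin D) ℝ)
    (hΦ : IsHawkesKernel D Φ) (hH : HypothesisH D Φ)
    (S : Matrix (Fin D) (Fin D) ℝ) (hSdiag : S.IsDiag) (hSpos : ∀ i, 0 < S i i)
    (χ : ℝ → Matrix (Fin D) (Fin D) ℝ)
    (hχint : ∀ i j, Integrable fun t => χ t i j)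
    (hχcausal : ∀ i j, ∀ᵐ t : ℝ, t < 0 → χ t i j = 0)
    (hsol : ∀ᵐ t : ℝ, 0 < t → hawkesG D Φ S t = χ t + mconv D χ (hawkesG D Φ S) t) :
    ∀ᵐ t : ℝ, χ t = Φ t := by
  have hχ : IntM D χ := hχint
  have hΦi : IntM D Φ := hΦ.2.2.1
  have hΨ := psi_int hΦ hH
  set Ψ := hawkesPsi D Φ with hΨdef
  have hqeq : hawkesQ D Φ S = conjRev D S Ψ := rfl
  set q := conjRev D S Ψ with hqdef
  set p := conjRev D S Φ with hpdef
  have hq : IntM D q := conjRev_int hΨ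
  have hp : IntM D p := conjRev_int hΦi
  have hgeq : hawkesG D Φ S = fun t => (fun t => Ψ t + q t) t + mconv D Ψ q t := rfl
  set g := hawkesG D Φ S with hgdef
  have hg : IntM D g := by rw [hgeq]; exact (hΨ.add hq).add (hΨ.mconv hq)
  have hχg : IntM D (mconv D χ g) := hχ.mconv hg
  have hχΨ : IntM D (mconv D χ Ψ) := hχ.mconv hΨ
  -- the anticausal remainder
  set h : ℝ → Matrix (Fin D) (Fin D) ℝ := fun t => (fun t => g t - χ t) t - mconv D χ g t with hh
  have hhi : IntM D h := (hg.sub hχ).sub hχg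
  have hh0 : ∀ᵐ t : ℝ, 0 < t → h t = 0 := by
    filter_upwards [hsol] with t ht h0
    simp only [hh]
    rw [ht h0]; abel
  set a : ℝ → Matrix (Fin D) (Fin D) ℝ := fun t => (fun t => Ψ t - χ t) t - mconv D χ Ψ t with ha
  have hai : IntM D a := (hΨ.sub hχ).sub hχΨ
  set b : ℝ → Matrix (Fin D) (Fin D) ℝ := fun t => (fun t => h t - p t) t - mconv D h p t with hb
  have hbi : IntM D b := (hhi.sub hp).sub (hhi.mconv hp)
  have hχc : ∀ᵐ t : ℝ, t < 0 → χ t = 0 := by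
    have : ∀ᵐ t : ℝ, ∀ i j, t < 0 → χ t i j = 0 := by
      simp only [ae_all_iff]; exact fun i j => hχcausal i j
    filter_upwards [this] with t ht h0
    ext i j; exact ht i j h0
  have hΨc : ∀ t < (0 : ℝ), Ψ t = 0 := psi_causal hΦ
  have hp0 : ∀ t > (0 : ℝ), p t = 0 := by
    intro t ht
    simp [hpdef, conjRev, hΦ.2.2.2 (-t) (by linarith)]
  have hac : ∀ᵐ t : ℝ, t < 0 → a t = 0 := by
    filter_upwards [hχc] with t ht h0
    simp [ha, ht h0, hΨc t h0, mconv_causal hχc hΨc t h0]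
  have hbc : ∀ᵐ t : ℝ, 0 < t → b t = 0 := by
    filter_upwards [hh0] with t ht h0
    simp [hb, ht h0, hp0 t h0, mconv_anticausal hh0 hp0 t h0]
  have hSu : IsUnit S.det := by
    rw [← hSdiag.diagonal_diag, Matrix.det_diagonal]
    exact (Finset.prod_pos fun i _ => hSpos i).ne'.isUnit
  have hSS : (S⁻¹).map Complex.ofReal * S.map Complex.ofReal = 1 := by
    have := congrArg (fun M : Matrix (Fin D) (Fin D) ℝ => M.map Complex.ofRealHom)
      (Matrix.nonsing_inv_mul S hSu)
    simp only [Matrix.map_mul] at this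
    rw [Matrix.map_one _ (map_zero _) (map_one _)] at this
    exact this
  have hSS' := mul_eq_one_comm.1 hSS
  have hab : ∀ᵐ t : ℝ, a t = b t := by
    refine mlaplace_inj hai hbi fun w => ?_
    rw [ha, hb, mlaplace_sub (hΨ.sub hχ) hχΨ, mlaplace_sub hΨ hχ, mlaplace_mconv hχ hΨ,
      mlaplace_sub (hhi.sub hp) (hhi.mconv hp), mlaplace_sub hhi hp, mlaplace_mconv hhi hp,
      hh, mlaplace_sub (hg.sub hχ) hχg, mlaplace_sub hg hχ, mlaplace_mconv hχ hg, hgeq,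
      mlaplace_add (hΨ.add hq) (hΨ.mconv hq), mlaplace_add hΨ hq, mlaplace_mconv hΨ hq]
    have hqp : (1 + mlaplace D q (w * Complex.I)) * (1 - mlaplace D p (w * Complex.I)) = 1 := by
      rw [hqdef, hpdef, conjRev_laplace hΨ, conjRev_laplace hΦi]
      have hi := congrArg Matrix.transpose (psi_inv hΦ hH (-w))
      rw [Matrix.transpose_mul, Matrix.transpose_add, Matrix.transpose_sub,
        Matrix.transpose_one] at hi
      rw [← hΨdef] at hi
      set X := (mlaplace D Ψ ((-w : ℝ) * Complex.I))ᵀ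
      set Y := (mlaplace D Φ ((-w : ℝ) * Complex.I))ᵀ
      set U := S.map Complex.ofReal
      set V := (S⁻¹).map Complex.ofReal
      have e1 : 1 + U * X * V = U * (1 + X) * V := by
        rw [mul_add, add_mul, mul_one, hSS']
      have e2 : 1 - U * Y * V = U * (1 - Y) * V := by
        rw [mul_sub, sub_mul, mul_one, hSS']
      rw [e1, e2]
      calc U * (1 + X) * V * (U * (1 - Y) * V)
          = U * (1 + X) * (V * U) * (1 - Y) * V := by noncomm_ring
        _ = U * ((1 + X) * (1 - Y)) * V := by rw [hSS]; noncomm_ring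
        _ = 1 := by rw [hi, mul_one, hSS']
    generalize mlaplace D q (w * Complex.I) = Q at *
    generalize mlaplace D p (w * Complex.I) = P at *
    generalize mlaplace D Ψ (w * Complex.I) = X at *
    generalize mlaplace D χ (w * Complex.I) = C at *
    have e : X - C - C * X = (1 - C) * (1 + X) * ((1 + Q) * (1 - P)) - 1 := by
      rw [hqp]; noncomm_ring
    rw [e]; noncomm_ring
  have ha0 : ∀ᵐ t : ℝ, a t = 0 := by
    have hne : ∀ᵐ t : ℝ, t ≠ 0 := by simp [ae_iff]
    filter_upwards [hac, hbc, hab, hne] with t h1 h2 h3 h4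
    rcases lt_or_gt_of_ne h4 with h5 | h5
    · exact h1 h5
    · rw [h3]; exact h2 h5
  refine mlaplace_inj hχ hΦi fun w => ?_
  have hA := mlaplace_congr_zero ha0 (w * Complex.I)
  rw [ha, mlaplace_sub (hΨ.sub hχ) hχΨ, mlaplace_sub hΨ hχ, mlaplace_mconv hχ hΨ] at hA
  have hi := mul_eq_one_comm.1 (psi_inv hΦ hH w)
  rw [← hΨdef] at hi
  generalize mlaplace D Ψ (w * Complex.I) = X at *
  generalize mlaplace D χ (w * Complex.I) = C at *
  generalize mlaplace D Φ (w * Complex.I) = F at *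
  have h1 : (1 - C) * (1 + X) = 1 := by
    calc (1 - C) * (1 + X) = 1 + (X - C - C * X) := by noncomm_ring
      _ = 1 := by rw [hA, add_zero]
  have h2 : 1 - C = 1 - F := by
    calc 1 - C = (1 - C) * ((1 + X) * (1 - F)) := by rw [hi, mul_one]
      _ = 1 - F := by rw [← mul_assoc, h1, one_mul]
  exact sub_right_injective h2
end
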